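/- Let A be a structurable division algebra over a field k with char(k) ≠ 2 and char(k) ≠ 3, let 0 ≠ x ∈ A with conjugate inverse x̂, and let 0 ≠ s ∈ S with conjugate inverse ŝ ∈ S. Then q_x(s) ≠ 0 and its conjugate inverse is q_{x̂}(ŝ); equivalently, q_x(s)·(q_{x̂}(ŝ)·z) = q_{x̂}(ŝ)·(q_x(s)·z) = −z for all z ∈ A. -/

import Mathlib

/-- The triple product `{x,y,z} := (x·ȳ)·z + (z·ȳ)·x − (z·x̄)·y` of a (not necessarily
associative or commutative) unital algebra `A` equipped with an involution `bar`. -/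
def strTrip {A : Type*} [NonAssocRing A] (bar : A → A) (x y z : A) : A :=
  x * bar y * z + z * bar y * x - z * bar x * y

/-- `ψ(x,y) := x·ȳ − y·x̄`. -/
def strPsi {A : Type*} [NonAssocRing A] (bar : A → A) (x y : A) : A :=
  x * bar y - y * bar x

/-- `q_x(s) := (1/6)·ψ(x, U_x(s·x))`, where `U_x y := {x,y,x}`. -/
noncomputable def strQ (k : Type*) [Field k] {A : Type*} [NonAssocRing A] [Module k A]
    (bar : A → A) (x s : A) : A :=
  (6 : k)⁻¹ • strPsi bar x (strTrip bar x (s * x) x)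

/-- `(A, bar)` is a structurable algebra over `k`: `bar` is a `k`-linear involutive
anti-automorphism of `A`, and the operator identity
`[V_{x,y}, V_{z,w}] = V_{{x,y,z},w} − V_{z,{y,x,w}}` holds, where
`V_{x,y} z := strTrip bar x y z`. -/
def IsStructurable (k : Type*) [Field k] (A : Type*) [NonAssocRing A] [Module k A]
    (bar : A → A) : Prop :=
  (∀ x y : A, bar (x + y) = bar x + bar y) ∧
  (∀ (c : k) (x : A), bar (c • x) = c • bar x) ∧
  (∀ x y : A, bar (x * y) = bar y * bar x) ∧
  (∀ x : A, bar (bar x) = x) ∧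
  (∀ x y z w a : A,
    strTrip bar x y (strTrip bar z w a) - strTrip bar z w (strTrip bar x y a)
      = strTrip bar (strTrip bar x y z) w a - strTrip bar z (strTrip bar y x w) a)

/-- `A` is a (conjugate) division algebra: every nonzero `u ∈ A` has a conjugate
inverse `v`, i.e. `V_{u,v} = id`. -/
def IsConjDivision {A : Type*} [NonAssocRing A] (bar : A → A) : Prop :=
  ∀ u : A, u ≠ 0 → ∃ v : A, ∀ z : A, strTrip bar u v z = z

/-!
For a skew element `s` one has `V_{1,s} = -V_{s,1}`, so the defining identity says that `V_{s,1}`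
is a derivation of the triple product; comparing it with the identity for `V_{u,1}`, `u` hermitian,
gives skew-alternativity `[s,x,y] = -[x,s,y] = [x,y,s]`. This yields the exchange rules
`{a, b, s·z} + s·{b, a, z} = ψ(s·b, a)·z` and `{a, s·b, z} - {b, s·a, z} = -ψ(a, b)·(s·z)`.

Let `y = x̂`, `t = ŝ` and `q = q_y(t)`. The first rule and the defining identity give
`q·x = -(1/3) U_y(t·y)` and then `q·U_x(s·x) = 3y` and `V_{U_x(s·x), q·x} = -3·id`.
The second rule, applied to the skew element `q` and the pair `x`, `U_x(s·x)`, turns these into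
`6 q_x(s)·(q·z) = -6z`.
-/

/-- `IsConjInverse bar u v` says that `v` is the conjugate inverse of `u`, that is,
`V_{u,v} = id`. -/
def IsConjInverse {A : Type*} [NonAssocRing A] (bar : A → A) (u v : A) : Prop :=
  ∀ z : A, strTrip bar u v z = z

theorem strPsi_swap {A : Type*} [NonAssocRing A] (bar : A → A) (x y : A) :
    strPsi bar y x = -strPsi bar x y :=
  (neg_sub _ _).symm

theorem strTrip_sub_right {A : Type*} [NonAssocRing A] (bar : A → A) (x y z w : A) :
    strTrip bar x y (z - w) = strTrip bar x y z - strTrip bar x y w := by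
  simp only [strTrip, sub_mul, mul_sub]
  abel

theorem strTrip_smul_right {k A : Type*} [Field k] [NonAssocRing A] [Module k A]
    [SMulCommClass k A A] [IsScalarTower k A A] (bar : A → A) (c : k) (x y z : A) :
    strTrip bar x y (c • z) = c • strTrip bar x y z := by
  simp only [strTrip, smul_mul_assoc, mul_smul_comm, smul_add, smul_sub]

theorem strTrip_sub_strTrip_swap {A : Type*} [NonAssocRing A] (bar : A → A) (x y z : A) :
    strTrip bar x y z - strTrip bar z y x = strPsi bar x z * y := by
  simp only [strTrip, strPsi, sub_mul]
  abel

theorem six_smul_strQ {k A : Type*} [Field k] [NonAssocRing A] [Module k A]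
    [NeZero (2 : k)] [NeZero (3 : k)] (bar : A → A) (x s : A) :
    (6 : k) • strQ k bar x s = strPsi bar x (strTrip bar x (s * x) x) := by
  have six_ne_zero : (6 : k) ≠ 0 := by
    rw [show (6 : k) = 2 * 3 by norm_num]
    exact mul_ne_zero two_ne_zero three_ne_zero
  rw [strQ, smul_inv_smul₀ six_ne_zero]

theorem IsConjInverse.mul_eq_neg_one_of_skew {A : Type*} [NonAssocRing A] {bar : A → A} {s t : A}
    (hs : bar s = -s) (ht : bar t = -t) (hst : IsConjInverse bar s t) : t * s = -1 := by
  simpa [strTrip, hs, ht, neg_eq_iff_eq_neg] using hst 1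

namespace IsStructurable

variable {k : Type*} [Field k] {A : Type*} [NonAssocRing A] [Module k A] {bar : A → A}

theorem bar_add (h : IsStructurable k A bar) (x y : A) : bar (x + y) = bar x + bar y :=
  h.1 x y

theorem bar_smul (h : IsStructurable k A bar) (c : k) (x : A) : bar (c • x) = c • bar x :=
  h.2.1 c x

theorem bar_mul (h : IsStructurable k A bar) (x y : A) : bar (x * y) = bar y * bar x :=
  h.2.2.1 x y

theorem bar_bar (h : IsStructurable k A bar) (x : A) : bar (bar x) = x :=
  h.2.2.2.1 x

theorem strTrip_commutator (h : IsStructurable k A bar) (x y z w a : A) :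
    strTrip bar x y (strTrip bar z w a) - strTrip bar z w (strTrip bar x y a)
      = strTrip bar (strTrip bar x y z) w a - strTrip bar z (strTrip bar y x w) a :=
  h.2.2.2.2 x y z w a

theorem bar_zero (h : IsStructurable k A bar) : bar 0 = 0 := by
  simpa using h.bar_add 0 0

theorem bar_neg (h : IsStructurable k A bar) (x : A) : bar (-x) = -bar x := by
  rw [eq_neg_iff_add_eq_zero, ← h.bar_add, neg_add_cancel, h.bar_zero]

theorem bar_sub (h : IsStructurable k A bar) (x y : A) : bar (x - y) = bar x - bar y := by
  rw [sub_eq_add_neg, h.bar_add, h.bar_neg, sub_eq_add_neg]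

theorem bar_one (h : IsStructurable k A bar) : bar 1 = 1 := by
  simpa [h.bar_bar] using (h.bar_mul 1 (bar 1)).symm

theorem bar_add_bar (h : IsStructurable k A bar) (x : A) : bar (x + bar x) = x + bar x := by
  rw [h.bar_add, h.bar_bar, add_comm]

theorem bar_sub_bar (h : IsStructurable k A bar) (x : A) : bar (x - bar x) = -(x - bar x) := by
  rw [h.bar_sub, h.bar_bar, neg_sub]

theorem bar_associator (h : IsStructurable k A bar) (x y z : A) :
    bar (associator x y z) = -associator (bar z) (bar y) (bar x) := by
  simp only [associator_apply, h.bar_sub, h.bar_mul, neg_sub]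

theorem bar_strPsi (h : IsStructurable k A bar) (x y : A) :
    bar (strPsi bar x y) = -strPsi bar x y := by
  simp only [strPsi, h.bar_sub, h.bar_mul, h.bar_bar, neg_sub]

theorem bar_strQ (h : IsStructurable k A bar) (x s : A) :
    bar (strQ k bar x s) = -strQ k bar x s := by
  rw [strQ, h.bar_smul, h.bar_strPsi, smul_neg]

theorem strTrip_sub_left (h : IsStructurable k A bar) (x y z w : A) :
    strTrip bar (x - y) z w = strTrip bar x z w - strTrip bar y z w := by
  simp only [strTrip, h.bar_sub, sub_mul, mul_sub]
  abel

theorem strTrip_sub_middle (h : IsStructurable k A bar) (x y z w : A) :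
    strTrip bar x (y - z) w = strTrip bar x y w - strTrip bar x z w := by
  simp only [strTrip, h.bar_sub, sub_mul, mul_sub]
  abel

theorem two_smul_skew_mul (h : IsStructurable k A bar) {s : A} (hs : bar s = -s) (z : A) :
    (2 : k) • (s * z) = strTrip bar s z 1 - strTrip bar 1 z s := by
  rw [strTrip_sub_strTrip_swap, strPsi, h.bar_one, hs, mul_one, one_mul, sub_neg_eq_add, add_mul,
    two_smul]

section SkewAlternativity

theorem associator_skew_hermitian_relation (h : IsStructurable k A bar) {s u : A}
    (hs : bar s = -s) (hu : bar u = u) (w : A) :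
    associator s u w - associator u s w - (2 : k) • associator u w s
      = (3 : k) • (associator w s u + associator w u s) := by
  have V_s := h.strTrip_commutator s 1 u 1 w
  simp only [strTrip, h.bar_add, h.bar_sub, h.bar_neg, h.bar_mul, h.bar_one, hs, hu, mul_one,
    one_mul, add_mul, mul_add, sub_mul, mul_sub, neg_mul, mul_neg, neg_neg] at V_s
  simp only [associator_apply]
  linear_combination (norm := module) -V_s

variable [NeZero (2 : k)]

theorem associator_skew_hermitian_right (h : IsStructurable k A bar) {s u : A}
    (hs : bar s = -s) (hu : bar u = u) (w : A) :
    associator w s u = -associator w u s := by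
  have V_u_on_s_one_w : associator s u w - associator u s w - (2 : k) • associator u w s
      = -(associator w s u + associator w u s) := by
    have V_u := h.strTrip_commutator u 1 s 1 w
    simp only [strTrip, h.bar_add, h.bar_sub, h.bar_mul, h.bar_one, hs, hu, mul_one, one_mul,
      add_mul, mul_add, sub_mul, mul_sub, neg_mul, mul_neg] at V_u
    simp only [associator_apply]
    linear_combination (norm := module) V_u
  have four : (2 : k) • (2 : k) • (associator w s u + associator w u s) = 0 := by
    linear_combination (norm := module)
      V_u_on_s_one_w - h.associator_skew_hermitian_relation hs hu w
  simpa only [smul_eq_zero_iff_right (two_ne_zero' k), add_eq_zero_iff_eq_neg] using four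

theorem associator_skew_hermitian_left (h : IsStructurable k A bar) {s u : A}
    (hs : bar s = -s) (hu : bar u = u) (w : A) :
    associator s u w = -associator u s w := by
  have mirrored := congrArg bar (h.associator_skew_hermitian_right hs hu (bar w))
  simp only [h.bar_neg, h.bar_associator, h.bar_bar, hs, hu] at mirrored
  simp only [associator_apply, neg_mul, mul_neg] at mirrored ⊢
  linear_combination (norm := module) mirrored

theorem associator_skew_hermitian_cycle (h : IsStructurable k A bar) {s u : A}
    (hs : bar s = -s) (hu : bar u = u) (w : A) :
    associator s u w = associator u w s := by
  apply smul_right_injective A (two_ne_zero' k)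
  linear_combination (norm := module) h.associator_skew_hermitian_relation hs hu w
    + h.associator_skew_hermitian_left hs hu w
    + (3 : k) • h.associator_skew_hermitian_right hs hu w

variable [NeZero (3 : k)]

theorem associator_skew_skew_skew (h : IsStructurable k A bar) {r s t : A}
    (hr : bar r = -r) (hs : bar s = -s) (ht : bar t = -t) :
    associator s t r = -associator t s r := by
  have V_s_on_t_one_r : ∀ {s t : A} (r : A), bar s = -s → bar t = -t →
      associator s t r - associator t s r + associator r s t - associator r t s
        - (2 : k) • associator t r s + (2 : k) • associator s r t = 0 := by
    intro s t r hs ht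
    have V_s := h.strTrip_commutator s 1 t 1 r
    simp only [strTrip, h.bar_add, h.bar_sub, h.bar_neg, h.bar_mul, h.bar_one, hs, ht, mul_one,
      one_mul, add_mul, mul_add, sub_mul, mul_sub, neg_mul, mul_neg, neg_neg] at V_s
    simp only [associator_apply]
    linear_combination (norm := module) -V_s
  have bar_V_r_on_s_t_one : ∀ {s t r : A}, bar s = -s → bar t = -t → bar r = -r →
      (2 : k) • associator r s t - associator s t r - (3 : k) • associator t r s
        + associator s r t - (3 : k) • associator r t s = 0 := by
    intro s t r hs ht hr
    have V_r := congrArg bar (h.strTrip_commutator r 1 s t 1)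
    simp only [strTrip, h.bar_add, h.bar_sub, h.bar_neg, h.bar_mul, h.bar_one, hs, ht, hr, mul_one,
      one_mul, add_mul, mul_add, sub_mul, mul_sub, neg_mul, mul_neg, neg_neg] at V_r
    simp only [associator_apply]
    linear_combination (norm := module) -V_r
  have six : (2 : k) • (3 : k) • associator s t r = (2 : k) • (3 : k) • -associator t s r := by
    linear_combination (norm := module) V_s_on_t_one_r t hs hr - bar_V_r_on_s_t_one ht hr hs
      - (2 : k) • bar_V_r_on_s_t_one hr ht hs
  simpa only [smul_right_inj (two_ne_zero' k), smul_right_inj (three_ne_zero' k)] using six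

theorem associator_skew_left (h : IsStructurable k A bar) {s : A} (hs : bar s = -s) (x y : A) :
    associator s x y = -associator x s y := by
  have hermitian_any := h.associator_skew_hermitian_left hs (h.bar_add_bar x) y
  have skew_hermitian : associator s (x - bar x) (y + bar y)
      = -associator (x - bar x) s (y + bar y) := by
    have ht := h.bar_sub_bar x
    have hu := h.bar_add_bar y
    rw [h.associator_skew_hermitian_right ht hu, h.associator_skew_hermitian_cycle hs hu,
      ← h.associator_skew_hermitian_left ht hu, h.associator_skew_hermitian_right hs hu, neg_neg]
  have skew_skew := h.associator_skew_skew_skew (h.bar_sub_bar y) hs (h.bar_sub_bar x)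
  apply smul_right_injective A (two_ne_zero' k)
  apply smul_right_injective A (two_ne_zero' k)
  simp only [associator_apply, add_mul, mul_add, sub_mul, mul_sub]
    at hermitian_any skew_hermitian skew_skew ⊢
  linear_combination (norm := module) (2 : k) • hermitian_any + skew_hermitian + skew_skew

theorem associator_skew_right (h : IsStructurable k A bar) {s : A} (hs : bar s = -s) (x y : A) :
    associator x y s = -associator x s y := by
  have mirrored := congrArg bar (h.associator_skew_left hs (bar y) (bar x))
  simp only [h.bar_neg, h.bar_associator, h.bar_bar, hs] at mirrored
  simp only [associator_apply, neg_mul, mul_neg] at mirrored ⊢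
  linear_combination (norm := module) mirrored

theorem associator_skew_cycle (h : IsStructurable k A bar) {s : A} (hs : bar s = -s) (x y : A) :
    associator s x y = associator x y s := by
  rw [h.associator_skew_left hs, h.associator_skew_right hs]

theorem strTrip_skew_add_skew_mul_strTrip_one (h : IsStructurable k A bar) {s : A}
    (hs : bar s = -s) (a b : A) :
    strTrip bar a b s + s * strTrip bar b a 1 = strPsi bar (s * b) a := by
  have a_part := h.associator_skew_right (h.bar_sub_bar a) s (bar b)
  have b_part := h.associator_skew_right (h.bar_sub_bar b) s (bar a)
  have cycle := h.associator_skew_cycle hs a (bar b)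
  simp only [associator_apply, strTrip, strPsi, h.bar_mul, hs, mul_one, one_mul, mul_add, sub_mul,
    mul_sub, mul_neg] at a_part b_part cycle ⊢
  linear_combination (norm := module) a_part - b_part - cycle

theorem strTrip_skew_mul_one_sub_strTrip (h : IsStructurable k A bar) {s p : A}
    (hs : bar s = -s) (hp : bar p = -p) (z : A) :
    strTrip bar (p * s) 1 z - strTrip bar p s z = (2 : k) • (p * (s * z)) := by
  have swap := h.associator_skew_right hp z s
  have cycle := (h.associator_skew_cycle hp s z).trans (h.associator_skew_cycle hs z p)
  simp only [associator_apply] at swap cycle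
  simp only [strTrip, h.bar_mul, h.bar_one, hs, hp, mul_one, neg_mul, mul_neg, neg_neg]
  linear_combination (norm := module) swap + (2 : k) • cycle

end SkewAlternativity

theorem ne_zero_of_isConjInverse [Nontrivial A] (h : IsStructurable k A bar) {u v : A}
    (huv : IsConjInverse bar u v) : u ≠ 0 := by
  rintro rfl
  simpa [strTrip, h.bar_zero] using huv 1

theorem isConjInverse_symm [NeZero (3 : k)] (h : IsStructurable k A bar) {x y : A}
    (hxy : IsConjInverse bar x y) : IsConjInverse bar y x := by
  intro z
  have U_one_sub_eq_zero : strTrip bar 1 (strTrip bar y x z - z) 1 = 0 := by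
    have commutator := h.strTrip_commutator x y 1 z 1
    rw [hxy, hxy, sub_self] at commutator
    rw [h.strTrip_sub_middle, ← neg_sub, ← commutator, neg_zero]
  rw [← sub_eq_zero]
  generalize strTrip bar y x z - z = u at U_one_sub_eq_zero ⊢
  have two_bar : bar u + bar u - u = 0 := by
    simpa only [strTrip, h.bar_one, mul_one, one_mul] using U_one_sub_eq_zero
  have two_self : u + u - bar u = 0 := by
    simpa only [h.bar_sub, h.bar_add, h.bar_bar, h.bar_zero] using congrArg bar two_bar
  rw [← smul_eq_zero_iff_right (three_ne_zero' k)]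
  linear_combination (norm := module) two_bar + (2 : k) • two_self

theorem skew_mul_skew_mul [NeZero (2 : k)] [NeZero (3 : k)] (h : IsStructurable k A bar) {s t : A}
    (hs : bar s = -s) (ht : bar t = -t) (hst : IsConjInverse bar s t) (z : A) :
    s * (t * z) = -z := by
  have ts := hst.mul_eq_neg_one_of_skew hs ht
  have st := (h.isConjInverse_symm hst).mul_eq_neg_one_of_skew ht hs
  have symm : associator z s t = associator z t s := by
    have V_st := hst z
    simp only [strTrip, hs, ht, mul_neg, neg_mul, st, one_mul] at V_st
    simp only [associator_apply, st, ts]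
    linear_combination (norm := module) V_st
  have assoc_zst : associator z s t = 0 := by
    rw [← smul_eq_zero_iff_right (two_ne_zero' k)]
    linear_combination (norm := module) symm + h.associator_skew_right hs z t
  have assoc_stz : associator s t z = 0 := by
    rw [h.associator_skew_cycle hs, h.associator_skew_cycle ht, assoc_zst]
  rw [← sub_eq_zero.mp assoc_stz, st, neg_one_mul]

theorem isConjInverse_of_skew_mul_skew_mul (h : IsStructurable k A bar) {s t : A}
    (hs : bar s = -s) (ht : bar t = -t) (hst : ∀ z, s * (t * z) = -z)
    (hts : ∀ z, t * (s * z) = -z) : IsConjInverse bar s t := by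
  intro z
  have st : s * t = -1 := by simpa using hst 1
  have right_st := congrArg bar (hst (bar z))
  have right_ts := congrArg bar (hts (bar z))
  simp only [h.bar_mul, h.bar_neg, h.bar_bar, hs, ht, mul_neg, neg_mul, neg_neg]
    at right_st right_ts
  simp [strTrip, hs, ht, st, right_st, right_ts]

variable [SMulCommClass k A A] [IsScalarTower k A A]

theorem strTrip_smul_left (h : IsStructurable k A bar) (c : k) (x y z : A) :
    strTrip bar (c • x) y z = c • strTrip bar x y z := by
  simp only [strTrip, h.bar_smul, smul_mul_assoc, mul_smul_comm, smul_add, smul_sub]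

theorem strTrip_smul_middle (h : IsStructurable k A bar) (c : k) (x y z : A) :
    strTrip bar x (c • y) z = c • strTrip bar x y z := by
  simp only [strTrip, h.bar_smul, smul_mul_assoc, mul_smul_comm, smul_add, smul_sub]

variable [NeZero (2 : k)] [NeZero (3 : k)]

theorem strTrip_skew_mul_add_skew_mul_strTrip (h : IsStructurable k A bar) {s : A}
    (hs : bar s = -s) (a b z : A) :
    strTrip bar a b (s * z) + s * strTrip bar b a z = strPsi bar (s * b) a * z := by
  have right_mul : ∀ z, (2 : k) • (strTrip bar a b (s * z) + s * strTrip bar b a z)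
      = (strPsi bar (strTrip bar a b s) 1 + strPsi bar s (strTrip bar a b 1)) * z := by
    intro z
    have V_sz : (2 : k) • strTrip bar a b (s * z)
        = strTrip bar a b (strTrip bar s z 1) - strTrip bar a b (strTrip bar 1 z s) := by
      rw [← strTrip_smul_right, h.two_smul_skew_mul hs, strTrip_sub_right]
    rw [smul_add, V_sz, h.two_smul_skew_mul hs, add_mul, ← strTrip_sub_strTrip_swap,
      ← strTrip_sub_strTrip_swap]
    linear_combination (norm := module)
      h.strTrip_commutator a b s z 1 - h.strTrip_commutator a b 1 z s
  have at_one := right_mul 1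
  rw [mul_one, mul_one, h.strTrip_skew_add_skew_mul_strTrip_one hs] at at_one
  apply smul_right_injective A (two_ne_zero' k)
  simp only [right_mul z, ← at_one, smul_mul_assoc]

theorem strTrip_skew_mul_sub_swap (h : IsStructurable k A bar) {s : A}
    (hs : bar s = -s) (a b z : A) :
    strTrip bar a (s * b) z - strTrip bar b (s * a) z = -(strPsi bar a b * (s * z)) := by
  have V_sb : ∀ a b, (2 : k) • strTrip bar a (s * b) z
      = strTrip bar a (strTrip bar s b 1) z - strTrip bar a (strTrip bar 1 b s) z := by
    intro a b
    rw [← h.strTrip_smul_middle, h.two_smul_skew_mul hs, h.strTrip_sub_middle]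
  have left_one : strTrip bar (strPsi bar b a * s) 1 z
      = strTrip bar (strTrip bar b s a) 1 z - strTrip bar (strTrip bar a s b) 1 z := by
    rw [← strTrip_sub_strTrip_swap, h.strTrip_sub_left]
  have left_s : strTrip bar (strPsi bar b a) s z
      = strTrip bar (strTrip bar b 1 a) s z - strTrip bar (strTrip bar a 1 b) s z := by
    rw [← mul_one (strPsi bar b a), ← strTrip_sub_strTrip_swap, h.strTrip_sub_left]
  have psi_part := h.strTrip_skew_mul_one_sub_strTrip hs (h.bar_strPsi b a) z
  rw [← neg_mul, ← strPsi_swap]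
  apply smul_right_injective A (two_ne_zero' k)
  simp only [← psi_part, smul_sub, V_sb, left_one, left_s]
  linear_combination (norm := module) h.strTrip_commutator b s a 1 z
    - h.strTrip_commutator b 1 a s z - h.strTrip_commutator a s b 1 z
    + h.strTrip_commutator a 1 b s z

section ConjInversePair

variable {x y s t : A}

theorem strPsi_skew_mul (h : IsStructurable k A bar) (hxy : IsConjInverse bar x y)
    (ht : bar t = -t) : strPsi bar (t * y) x = (2 : k) • t := by
  have add_rule := h.strTrip_skew_mul_add_skew_mul_strTrip ht x y 1
  rw [hxy, h.isConjInverse_symm hxy, mul_one, mul_one] at add_rule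
  rw [← add_rule, two_smul]

theorem strTrip_skew_mul_self (h : IsStructurable k A bar) (hxy : IsConjInverse bar x y)
    (ht : bar t = -t) : strTrip bar (t * y) y x = (3 : k) • (t * y) := by
  have swap := strTrip_sub_strTrip_swap bar (t * y) y x
  rw [hxy, h.strPsi_skew_mul hxy ht, smul_mul_assoc] at swap
  linear_combination (norm := module) swap

theorem isConjInverse_skew_mul (h : IsStructurable k A bar) (hxy : IsConjInverse bar x y)
    (hs : bar s = -s) (ht : bar t = -t) (hst : IsConjInverse bar s t) :
    IsConjInverse bar (t * y) (s * x) := by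
  intro z
  have hts := h.isConjInverse_symm hst
  have swap_rule := h.strTrip_skew_mul_sub_swap hs (t * y) x z
  rw [h.skew_mul_skew_mul hs ht hst, h.strPsi_skew_mul hxy ht, smul_mul_assoc,
    h.skew_mul_skew_mul ht hs hts, ← neg_one_smul k y, h.strTrip_smul_middle, hxy] at swap_rule
  linear_combination (norm := module) swap_rule

theorem strTrip_skew_mul_add_skew_mul_strTrip_eq_zero (h : IsStructurable k A bar) (hs : bar s = -s)
    (ht : bar t = -t) (hst : IsConjInverse bar s t) (y z : A) :
    strTrip bar y (t * y) (s * z) + s * strTrip bar (t * y) y z = 0 := by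
  rw [h.strTrip_skew_mul_add_skew_mul_strTrip hs, h.skew_mul_skew_mul hs ht hst]
  simp [strPsi, h.bar_neg]

theorem strTrip_strTrip_skew_left (h : IsStructurable k A bar) (hxy : IsConjInverse bar x y)
    (ht : bar t = -t) (z : A) :
    strTrip bar (strTrip bar y (t * y) y) x z = (3 : k) • strTrip bar y (t * y) z := by
  have hyx := h.isConjInverse_symm hxy
  have commutator := h.strTrip_commutator y (t * y) y x z
  rw [hyx, hyx, h.strTrip_skew_mul_self hxy ht, h.strTrip_smul_middle] at commutator
  linear_combination (norm := module) -commutator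

theorem strTrip_strTrip_skew_middle (h : IsStructurable k A bar) (hxy : IsConjInverse bar x y)
    (ht : bar t = -t) (z : A) :
    strTrip bar x (strTrip bar y (t * y) y) z = (3 : k) • strTrip bar (t * y) y z := by
  have commutator := h.strTrip_commutator (t * y) y x y z
  rw [hxy, hxy, h.strTrip_skew_mul_self hxy ht, h.strTrip_smul_left] at commutator
  linear_combination (norm := module) commutator

theorem neg_three_smul_strQ_mul (h : IsStructurable k A bar) (hxy : IsConjInverse bar x y)
    (ht : bar t = -t) :
    (-3 : k) • (strQ k bar y t * x) = strTrip bar y (t * y) y := by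
  have swap := strTrip_sub_strTrip_swap bar y x (strTrip bar y (t * y) y)
  rw [h.isConjInverse_symm hxy, h.strTrip_strTrip_skew_left hxy ht, ← six_smul_strQ (k := k),
    smul_mul_assoc] at swap
  apply smul_right_injective A (two_ne_zero' k)
  linear_combination (norm := module) swap

theorem strTrip_strQ_mul_left (h : IsStructurable k A bar) (hxy : IsConjInverse bar x y)
    (ht : bar t = -t) (z : A) :
    strTrip bar (strQ k bar y t * x) x z = -strTrip bar y (t * y) z := by
  have tripled := h.strTrip_strTrip_skew_left hxy ht z
  rw [← h.neg_three_smul_strQ_mul hxy ht, h.strTrip_smul_left] at tripled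
  apply smul_right_injective A (three_ne_zero' k)
  linear_combination (norm := module) -tripled

theorem strTrip_strQ_mul_middle (h : IsStructurable k A bar) (hxy : IsConjInverse bar x y)
    (ht : bar t = -t) (z : A) :
    strTrip bar x (strQ k bar y t * x) z = -strTrip bar (t * y) y z := by
  have tripled := h.strTrip_strTrip_skew_middle hxy ht z
  rw [← h.neg_three_smul_strQ_mul hxy ht, h.strTrip_smul_middle] at tripled
  apply smul_right_injective A (three_ne_zero' k)
  linear_combination (norm := module) -tripled

variable (h : IsStructurable k A bar) (hxy : IsConjInverse bar x y) (hs : bar s = -s)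
  (ht : bar t = -t) (hst : IsConjInverse bar s t)
include h hxy hs ht hst

theorem strPsi_skew_mul_strQ_mul : strPsi bar (s * x) (strQ k bar y t * x) = 0 := by
  have add_rule := h.strTrip_skew_mul_add_skew_mul_strTrip hs (strQ k bar y t * x) x 1
  rw [h.strTrip_strQ_mul_left hxy ht, h.strTrip_strQ_mul_middle hxy ht, mul_neg, ← neg_add,
    h.strTrip_skew_mul_add_skew_mul_strTrip_eq_zero hs ht hst, neg_zero, mul_one] at add_rule
  exact add_rule.symm

theorem strTrip_strQ_mul_skew_mul :
    strTrip bar (strQ k bar y t * x) x (s * x) = (-3 : k) • y := by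
  have vanishing := h.strTrip_skew_mul_add_skew_mul_strTrip_eq_zero hs ht hst y x
  rw [h.strTrip_skew_mul_self hxy ht, mul_smul_comm, h.skew_mul_skew_mul hs ht hst] at vanishing
  rw [h.strTrip_strQ_mul_left hxy ht]
  linear_combination (norm := module) -vanishing

theorem strTrip_skew_mul_strQ_mul :
    strTrip bar (s * x) x (strQ k bar y t * x) = (-3 : k) • y := by
  have swap := strTrip_sub_strTrip_swap bar (s * x) x (strQ k bar y t * x)
  rw [h.strPsi_skew_mul_strQ_mul hxy hs ht hst, zero_mul, sub_eq_zero] at swap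
  rw [swap, h.strTrip_strQ_mul_skew_mul hxy hs ht hst]

theorem strQ_mul_strTrip_skew :
    strQ k bar y t * strTrip bar x (s * x) x = (3 : k) • y := by
  have add_rule := h.strTrip_skew_mul_add_skew_mul_strTrip (h.bar_strQ y t) (s * x) x x
  rw [strPsi_swap bar (s * x), h.strPsi_skew_mul_strQ_mul hxy hs ht hst, neg_zero, zero_mul,
    h.strTrip_skew_mul_strQ_mul hxy hs ht hst] at add_rule
  linear_combination (norm := module) add_rule

theorem strTrip_strTrip_skew_strQ_mul (z : A) :
    strTrip bar (strTrip bar x (s * x) x) (strQ k bar y t * x) z = (-3 : k) • z := by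
  have U_x_q_mul_x : strTrip bar x (strQ k bar y t * x) x = (-3 : k) • (t * y) := by
    rw [h.strTrip_strQ_mul_middle hxy ht, h.strTrip_skew_mul_self hxy ht, neg_smul]
  have V_sx := h.strTrip_commutator x (s * x) x (strQ k bar y t * x) z
  have V_qx := h.strTrip_commutator x (strQ k bar y t * x) x (s * x) z
  rw [h.strTrip_skew_mul_strQ_mul hxy hs ht hst, h.strTrip_smul_middle, hxy] at V_sx
  rw [h.strTrip_strQ_mul_skew_mul hxy hs ht hst, h.strTrip_smul_middle, hxy, U_x_q_mul_x,
    h.strTrip_smul_left, h.isConjInverse_skew_mul hxy hs ht hst] at V_qx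
  linear_combination (norm := module) -V_sx - V_qx

theorem strQ_mul_strQ_mul (z : A) : strQ k bar x s * (strQ k bar y t * z) = -z := by
  have swap_rule := h.strTrip_skew_mul_sub_swap (h.bar_strQ y t) x (strTrip bar x (s * x) x) z
  rw [h.strQ_mul_strTrip_skew hxy hs ht hst, h.strTrip_strTrip_skew_strQ_mul hxy hs ht hst,
    h.strTrip_smul_middle, hxy, ← six_smul_strQ (k := k), smul_mul_assoc] at swap_rule
  apply smul_right_injective A (two_ne_zero' k)
  apply smul_right_injective A (three_ne_zero' k)
  linear_combination (norm := module) swap_rule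

theorem isConjInverse_strQ : IsConjInverse bar (strQ k bar x s) (strQ k bar y t) :=
  h.isConjInverse_of_skew_mul_skew_mul (h.bar_strQ x s) (h.bar_strQ y t)
    (h.strQ_mul_strQ_mul hxy hs ht hst)
    (h.strQ_mul_strQ_mul (h.isConjInverse_symm hxy) ht hs (h.isConjInverse_symm hst))

end ConjInversePair

end IsStructurable

theorem stmt12_general {k : Type*} [Field k] {A : Type*} [NonAssocRing A] [Module k A]
    [SMulCommClass k A A] [IsScalarTower k A A] [Nontrivial A]
    (h2 : (2 : k) ≠ 0) (h3 : (3 : k) ≠ 0)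
    (bar : A → A) (hstr : IsStructurable k A bar)
    (x : A) (xhat : A) (hxhat : ∀ z : A, strTrip bar x xhat z = z)
    (s : A) (hsS : bar s = -s) (shat : A) (hshatS : bar shat = -shat)
    (hshat : ∀ z : A, strTrip bar s shat z = z) :
    strQ k bar x s ≠ 0 ∧
    (∀ z : A, strTrip bar (strQ k bar x s) (strQ k bar xhat shat) z = z) ∧
    ∀ z : A, strQ k bar x s * (strQ k bar xhat shat * z) = -z ∧
      strQ k bar xhat shat * (strQ k bar x s * z) = -z := by
  have : NeZero (2 : k) := ⟨h2⟩
  have : NeZero (3 : k) := ⟨h3⟩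
  have inverse := hstr.isConjInverse_strQ hxhat hsS hshatS hshat
  have inverse_symm := hstr.isConjInverse_symm inverse
  have skew := hstr.bar_strQ x s
  have skew_hat := hstr.bar_strQ xhat shat
  exact ⟨hstr.ne_zero_of_isConjInverse inverse, inverse, fun z =>
    ⟨hstr.skew_mul_skew_mul skew skew_hat inverse z,
      hstr.skew_mul_skew_mul skew_hat skew inverse_symm z⟩⟩

/-- Let `A` be a structurable division algebra over a field `k` with
`char k ≠ 2, 3`, let `0 ≠ x ∈ A` with conjugate inverse `x̂`, and let `0 ≠ s ∈ S` with
conjugate inverse `ŝ ∈ S`.  Then `q_x(s) ≠ 0` and its conjugate inverse is `q_{x̂}(ŝ)`;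
equivalently, `q_x(s)·(q_{x̂}(ŝ)·z) = q_{x̂}(ŝ)·(q_x(s)·z) = −z` for all `z ∈ A`. -/
theorem stmt12 {k : Type*} [Field k] {A : Type*} [NonAssocRing A] [Module k A]
    [SMulCommClass k A A] [IsScalarTower k A A] [FiniteDimensional k A] [Nontrivial A]
    (h2 : (2 : k) ≠ 0) (h3 : (3 : k) ≠ 0)
    (bar : A → A) (hstr : IsStructurable k A bar) (hdiv : IsConjDivision bar)
    (x : A) (hx0 : x ≠ 0) (xhat : A) (hxhat : ∀ z : A, strTrip bar x xhat z = z)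
    (s : A) (hs0 : s ≠ 0) (hsS : bar s = -s)
    (shat : A) (hshatS : bar shat = -shat)
    (hshat : ∀ z : A, strTrip bar s shat z = z) :
    strQ k bar x s ≠ 0 ∧
    (∀ z : A, strTrip bar (strQ k bar x s) (strQ k bar xhat shat) z = z) ∧
    ∀ z : A, strQ k bar x s * (strQ k bar xhat shat * z) = -z ∧
      strQ k bar xhat shat * (strQ k bar x s * z) = -z := by
  exact stmt12_general h2 h3 bar hstr x xhat hxhat s hsS shat hshatS hshat
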